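/- Consistency of approximating decision rules under a unique fixed point: Under the hypotheses of the infinite-horizon consistency theorem (including 𝒱 compact under the Attouch–Wets distance dl and each B_ν having a fixed point V_ν = B_ν(V_ν) ∈ 𝒱), if the fixed point V = B(V) in 𝒱 is unique, then V_ν epi-converges to V, and for every (x,ξ) ∈ 𝒳 × Ξ the outer limit of the sets argmin_{y∈𝒴(x,ξ)} { φ_ν(x,y,ξ) + β V_ν(y) } is contained in argmin_{y∈𝒴(x,ξ)} { φ(x,y,ξ) + β V(y) }, and this latter set is nonempty. -/

import Mathlib

/-!
Compactness of `𝒱` gives, along any subsequence of the fixed points `V_ν`, a further subsequence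
converging to some `W ∈ 𝒱` in the Attouch–Wets distance, hence epi-converging. Equi-lower
semicontinuity upgrades epi-convergence to pointwise convergence, and since `𝒴(x, ξ)` is compact the
inner infima `b_ν(V_ν)(x, ξ)` converge as well. As these are equi-semicontinuous in `ξ`, a Fatou
lemma along weakly convergent measures, applied to the integrands and to their negatives, yields
`B_ν(V_ν)(x) → B(W)(x)`. Hence `W = B(W)`, so `W = V` on `X`, and the whole sequence converges
to `V`.

The Fatou lemma for `[0, ∞]`-valued integrands is the layer-cake formula together with the
portmanteau inequality on open sets. For extended-real integrands it is applied to the positive part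
of `F_ν + a`; what this loses is the tail of `F_ν` below `-a`, which the asymptotic integrability
condition makes uniformly small.

For the decision rules, the objectives satisfy a joint lower-limit inequality in `(ν, y)` and
converge pointwise, so minimizers accumulate only at minimizers.
-/

open Filter MeasureTheory Topology Set

noncomputable section

/-- Extended-real to extended-nonnegative-real (positive part). -/
def erealToENN (x : EReal) : ENNReal := if x = ⊤ then ⊤ else ENNReal.ofReal x.toReal

/-- Integral of an extended-real-valued function. -/
def eintegral {Ω : Type*} [MeasurableSpace Ω] (P : Measure Ω) (g : Ω → EReal) : EReal :=
  ((∫⁻ ω, erealToENN (g ω) ∂P : ENNReal) : EReal) -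
    ((∫⁻ ω, erealToENN (-(g ω)) ∂P : ENNReal) : EReal)

/-- Integrability of an extended-real-valued function. -/
def EIntegrable {Ω : Type*} [MeasurableSpace Ω] (P : Measure Ω) (g : Ω → EReal) : Prop :=
  AEMeasurable g P ∧ (∫⁻ ω, erealToENN (g ω) ∂P) < ⊤ ∧ (∫⁻ ω, erealToENN (-(g ω)) ∂P) < ⊤

/-- g·1{g ≤ α}. -/
def truncBelow {Ω : Type*} (g : Ω → EReal) (α : ℝ) (ω : Ω) : EReal :=
  if g ω ≤ (α : EReal) then g ω else 0

/-- g·1{g ≥ α}. -/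
def truncAbove {Ω : Type*} (g : Ω → EReal) (α : ℝ) (ω : Ω) : EReal :=
  if (α : EReal) ≤ g ω then g ω else 0

/-- Epi-convergence of a sequence of extended-real-valued functions on a set `Z`. -/
def EpiConvergesOn {E : Type*} [TopologicalSpace E] (Z : Set E)
    (F : ℕ → E → EReal) (f : E → EReal) : Prop :=
  ∀ z ∈ Z,
    (∀ zs : ℕ → E, (∀ ν, zs ν ∈ Z) → Tendsto zs atTop (𝓝 z) →
      f z ≤ liminf (fun ν => F ν (zs ν)) atTop) ∧
    (∃ zs : ℕ → E, (∀ ν, zs ν ∈ Z) ∧ Tendsto zs atTop (𝓝 z) ∧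
      limsup (fun ν => F ν (zs ν)) atTop ≤ f z)

/-- A sequence of functions is equi-lower semicontinuous on `Z`. -/
def EquiLscOn {E : Type*} [PseudoMetricSpace E] (Z : Set E) (F : ℕ → E → EReal) : Prop :=
  ∀ z ∈ Z,
    limsup (fun ν => F ν z) atTop = ⊥ ∨
    ∀ ρ ε : ℝ, 0 < ρ → 0 < ε → ∃ ν' : ℕ, ∃ δ : ℝ, 0 < δ ∧ ∀ ν, ν' ≤ ν →
      min (F ν z - (ε : EReal)) (ρ : EReal) ≤
        ⨅ (w : E) (_ : w ∈ Z) (_ : dist w z ≤ δ), F ν w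

/-- Equi-upper semicontinuity on `Z`. -/
def EquiUscOn {E : Type*} [PseudoMetricSpace E] (Z : Set E) (F : ℕ → E → EReal) : Prop :=
  EquiLscOn Z (fun ν z => -(F ν z))

/-- Iterated lower limit as `(ν, x) → (∞, x̄)` with `x` ranging over `X`. -/
def liminfNuX {E : Type*} [PseudoMetricSpace E] (X : Set E) (xb : E)
    (h : ℕ → E → EReal) : EReal :=
  ⨆ (δ : ℝ) (_ : 0 < δ) (ν' : ℕ),
    ⨅ (ν : ℕ) (_ : ν' ≤ ν) (x : E) (_ : x ∈ X) (_ : dist x xb ≤ δ), h ν x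

/-- Upper limit as `ν → ∞`. -/
def limsupNu (h : ℕ → EReal) : EReal := ⨅ (ν' : ℕ), ⨆ (ν : ℕ) (_ : ν' ≤ ν), h ν

/-- Lower limit as `α → −∞`. -/
def liminfAlphaBot (G : ℝ → EReal) : EReal := ⨆ (αb : ℝ), ⨅ (α : ℝ) (_ : α ≤ αb), G α

/-- Upper limit as `α → ∞`. -/
def limsupAlphaTop (G : ℝ → EReal) : EReal := ⨅ (αb : ℝ), ⨆ (α : ℝ) (_ : αb ≤ α), G α

/-- Weak convergence of measures: integrals of bounded continuous functions converge. -/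
def WeakConv {Ω : Type*} [TopologicalSpace Ω] [MeasurableSpace Ω]
    (Pν : ℕ → Measure Ω) (P : Measure Ω) : Prop :=
  ∀ h : Ω → ℝ, Continuous h → (∃ C : ℝ, ∀ ω, |h ω| ≤ C) →
    Tendsto (fun ν => ∫ ω, h ω ∂(Pν ν)) atTop (𝓝 (∫ ω, h ω ∂P))

/-- The outer limit of a sequence of sets in a topological space. -/
def OuterLimit {X : Type*} [TopologicalSpace X] (S : ℕ → Set X) : Set X :=
  {x | ∃ φ : ℕ → ℕ, StrictMono φ ∧ ∃ s : ℕ → X, (∀ κ, s κ ∈ S (φ κ)) ∧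
    Tendsto s atTop (𝓝 x)}

/-- The set of minimizers of `g` over `S`. -/
def ArgminOn {E : Type*} (S : Set E) (g : E → EReal) : Set E :=
  {y ∈ S | ∀ z ∈ S, g y ≤ g z}

/-- `b(f)(x,ξ) = inf_{y ∈ 𝒴(x,ξ)} { φ(x,y,ξ) + β f(y) }`. -/
def bop {E Ξ' : Type*} (Y : E → Ξ' → Set E) (β : ℝ) (φ : E → E → Ξ' → ℝ)
    (f : E → EReal) (x : E) (ξ : Ξ') : EReal :=
  ⨅ (y : E) (_ : y ∈ Y x ξ), (((φ x y ξ : ℝ) : EReal) + (β : EReal) * f y)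

/-- The epigraph of `f`, viewed within `X × ℝ`. -/
def epiSet {E : Type*} (X : Set E) (f : E → EReal) : Set (E × ℝ) :=
  {p | p.1 ∈ X ∧ f p.1 ≤ ((p.2 : ℝ) : EReal)}

/-- The Attouch–Wets distance between `f` and `g` (epigraphs taken within `X × ℝ`,
with centre `zc`). -/
def awDist {E : Type*} [PseudoMetricSpace E] (X : Set E) (zc : E × ℝ)
    (f g : E → EReal) : ℝ :=
  ∫ ρ in Set.Ioi (0 : ℝ),
    (sSup ((fun z => |Metric.infDist z (epiSet X f) - Metric.infDist z (epiSet X g)|) ''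
      (Metric.closedBall zc ρ))) * Real.exp (-ρ)

/-- `f` is a lower semicontinuous function on `X`, not identically `∞`. -/
def LscFcnOn {E : Type*} [TopologicalSpace E] (X : Set E) (f : E → EReal) : Prop :=
  LowerSemicontinuousOn f X ∧ ∃ x ∈ X, f x ≠ ⊤

/-- `𝒱` is (sequentially) closed with respect to the Attouch–Wets distance. -/
def DlSeqClosed {E : Type*} [PseudoMetricSpace E] (X : Set E) (zc : E × ℝ)
    (𝒱 : Set (E → EReal)) : Prop :=
  ∀ Vs : ℕ → (E → EReal), (∀ ν, Vs ν ∈ 𝒱) → ∀ W, LscFcnOn X W →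
    Tendsto (fun ν => awDist X zc (Vs ν) W) atTop (𝓝 0) → W ∈ 𝒱

/-- `𝒱` is (sequentially) compact with respect to the Attouch–Wets distance. -/
def DlSeqCompact {E : Type*} [PseudoMetricSpace E] (X : Set E) (zc : E × ℝ)
    (𝒱 : Set (E → EReal)) : Prop :=
  ∀ Vs : ℕ → (E → EReal), (∀ ν, Vs ν ∈ 𝒱) → ∃ W ∈ 𝒱, ∃ φ : ℕ → ℕ,
    StrictMono φ ∧ Tendsto (fun κ => awDist X zc (Vs (φ κ)) W) atTop (𝓝 0)

/-- The outer limit, with respect to epi-convergence on `X`, of a sequence of sets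
of functions. -/
def EpiOuterLimit {E : Type*} [TopologicalSpace E] (X : Set E)
    (S : ℕ → Set (E → EReal)) : Set (E → EReal) :=
  {W | ∃ φ : ℕ → ℕ, StrictMono φ ∧ ∃ s : ℕ → (E → EReal),
    (∀ κ, s κ ∈ S (φ κ)) ∧ EpiConvergesOn X s W}

section WeakConvergence

lemma volume_restrict_Ioi_ofReal_lt (a : ENNReal) :
    (volume : Measure ℝ).restrict (Ioi 0) {t | ENNReal.ofReal t < a} = a := by
  rw [Measure.restrict_apply (measurableSet_lt ENNReal.measurable_ofReal measurable_const)]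
  rcases eq_or_ne a ⊤ with rfl | ha
  · simp [ENNReal.ofReal_lt_top]
  · have : {t | ENNReal.ofReal t < a} ∩ Ioi 0 = Ioo 0 a.toReal := by
      ext t
      exact and_comm.trans <| and_congr_right fun ht => ENNReal.ofReal_lt_iff_lt_toReal ht.le ha
    simp [this, ha]

variable {Ω : Type*} [MeasurableSpace Ω] {P : Measure Ω} {Pν : ℕ → Measure Ω}

lemma WeakConv.measure_le_liminf_of_isOpen [TopologicalSpace Ω] [OpensMeasurableSpace Ω]
    [HasOuterApproxClosed Ω] [IsProbabilityMeasure P] [∀ ν, IsProbabilityMeasure (Pν ν)]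
    (h : WeakConv Pν P) {U : Set Ω} (hU : IsOpen U) :
    P U ≤ liminf (fun ν => Pν ν U) atTop := by
  have hlim : Tendsto (β := ProbabilityMeasure Ω) (fun ν => ⟨Pν ν, inferInstance⟩) atTop
      (𝓝 ⟨P, inferInstance⟩) :=
    ProbabilityMeasure.tendsto_iff_forall_integral_tendsto.2 fun f =>
      h f f.continuous ⟨‖f‖, f.norm_coe_le_norm⟩
  exact ProbabilityMeasure.le_liminf_measure_open_of_tendsto hlim hU

lemma lintegral_eq_lintegral_measure_ofReal_lt [SFinite P] {g : Ω → ENNReal}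
    (hg : AEMeasurable g P) :
    ∫⁻ ω, g ω ∂P = ∫⁻ t in Ioi (0 : ℝ), P {ω | ENNReal.ofReal t < g ω} := by
  let S : Set (Ω × ℝ) := {p | ENNReal.ofReal p.2 < hg.mk g p.1}
  have hS : MeasurableSet S := measurableSet_lt
    (ENNReal.measurable_ofReal.comp measurable_snd) (hg.measurable_mk.comp measurable_fst)
  calc ∫⁻ ω, g ω ∂P = ∫⁻ ω, hg.mk g ω ∂P := lintegral_congr_ae hg.ae_eq_mk
    _ = ∫⁻ ω, volume.restrict (Ioi 0) (Prod.mk ω ⁻¹' S) ∂P :=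
        lintegral_congr fun ω => (volume_restrict_Ioi_ofReal_lt _).symm
    _ = P.prod (volume.restrict (Ioi 0)) S := (Measure.prod_apply hS).symm
    _ = ∫⁻ t in Ioi (0 : ℝ), P ((fun ω => (ω, t)) ⁻¹' S) := Measure.prod_apply_symm hS
    _ = ∫⁻ t in Ioi (0 : ℝ), P {ω | ENNReal.ofReal t < g ω} :=
        lintegral_congr fun t => measure_congr <| hg.ae_eq_mk.mono fun ω hω =>
          congrArg (ENNReal.ofReal t < ·) hω.symm

lemma WeakConv.measure_lt_le_liminf_measure_lt [TopologicalSpace Ω] [OpensMeasurableSpace Ω]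
    [HasOuterApproxClosed Ω] [IsProbabilityMeasure P] [∀ ν, IsProbabilityMeasure (Pν ν)]
    (h : WeakConv Pν P) {G : ℕ → Ω → ENNReal} {g : Ω → ENNReal}
    (hle : ∀ ω, g ω ≤ liminf (Function.uncurry G) (atTop ×ˢ 𝓝 ω)) (t : ENNReal) :
    P {ω | t < g ω} ≤ liminf (fun ν => Pν ν {ω | t < G ν ω}) atTop := by
  let U (N : ℕ) : Set Ω := interior {ω | ∀ ν ≥ N, t < G ν ω}
  have hUmono : Monotone U := fun M N hMN => interior_mono fun ω hω ν hν => hω ν (hMN.trans hν)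
  have hsub : {ω | t < g ω} ⊆ ⋃ N, U N := fun ω (hω : t < g ω) => by
    obtain ⟨A, hA, B, hB, hAB⟩ :=
      eventually_prod_iff.1 (eventually_lt_of_lt_liminf (hω.trans_le (hle ω)))
    obtain ⟨N, hN⟩ := eventually_atTop.1 hA
    exact mem_iUnion.2 ⟨N, mem_interior_iff_mem_nhds.2 <|
      hB.mono fun w hw ν hν => hAB (hN ν hν) hw⟩
  calc P {ω | t < g ω} ≤ P (⋃ N, U N) := measure_mono hsub
    _ = ⨆ N, P (U N) := hUmono.measure_iUnion
    _ ≤ _ := iSup_le fun N => (h.measure_le_liminf_of_isOpen isOpen_interior).trans <|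
        liminf_le_liminf <| (eventually_ge_atTop N).mono fun ν hν =>
          measure_mono fun ω hω => interior_subset hω ν hν

lemma WeakConv.lintegral_le_liminf_lintegral [TopologicalSpace Ω] [OpensMeasurableSpace Ω]
    [HasOuterApproxClosed Ω] [IsProbabilityMeasure P] [∀ ν, IsProbabilityMeasure (Pν ν)]
    (h : WeakConv Pν P) {G : ℕ → Ω → ENNReal} {g : Ω → ENNReal} (hg : AEMeasurable g P)
    (hG : ∀ ν, AEMeasurable (G ν) (Pν ν))
    (hle : ∀ ω, g ω ≤ liminf (Function.uncurry G) (atTop ×ˢ 𝓝 ω)) :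
    ∫⁻ ω, g ω ∂P ≤ liminf (fun ν => ∫⁻ ω, G ν ω ∂Pν ν) atTop := by
  have hmeas (ν : ℕ) : Measurable fun t : ℝ => Pν ν {ω | ENNReal.ofReal t < G ν ω} :=
    Antitone.measurable fun s t hst =>
      measure_mono fun ω hω => (ENNReal.ofReal_le_ofReal hst).trans_lt hω
  simp only [lintegral_eq_lintegral_measure_ofReal_lt hg,
    fun ν => lintegral_eq_lintegral_measure_ofReal_lt (hG ν)]
  exact (lintegral_mono fun t => h.measure_lt_le_liminf_measure_lt hle _).trans
    (lintegral_liminf_le hmeas)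

end WeakConvergence

section ExtendedIntegral

-- `erealToENN` is definitionally `EReal.toENNReal`; the lemmas below pass between the two by `rfl`.

lemma toENNReal_add_ofReal_le {a : ℝ} (ha : 0 ≤ a) (x : EReal) :
    x.toENNReal + ENNReal.ofReal a ≤ (x + a).toENNReal + (-x).toENNReal := by
  have ha' : (0 : EReal) ≤ a := EReal.coe_nonneg.2 ha
  rw [← EReal.real_coe_toENNReal]
  rcases le_total 0 x with hx | hx
  · rw [← EReal.toENNReal_add hx ha']
    exact le_self_add
  · induction x with
    | bot => simp
    | top => simp at hx
    | coe x =>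
      rw [EReal.toENNReal_of_nonpos hx, zero_add]
      calc (a : EReal).toENNReal = ((x + a : EReal) + -x).toENNReal := by
            norm_cast
            rw [add_neg_cancel_comm]
        _ ≤ _ := EReal.toENNReal_add_le

lemma toENNReal_add_coe_le {a : ℝ} (ha : 0 ≤ a) {Ω : Type*} (g : Ω → EReal) (ω : Ω) :
    (g ω + a).toENNReal + (-g ω).toENNReal ≤
      (g ω).toENNReal + ENNReal.ofReal a + (-truncBelow g (-a) ω).toENNReal := by
  have ha' : (0 : EReal) ≤ a := EReal.coe_nonneg.2 ha
  rw [← EReal.real_coe_toENNReal, truncBelow]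
  generalize g ω = x
  split_ifs with hxa
  · have : x + a ≤ 0 := by
      calc x + a ≤ ((-a : ℝ) : EReal) + a := add_le_add_left hxa _
        _ = 0 := by norm_cast; exact neg_add_cancel a
    rw [EReal.toENNReal_of_nonpos this, zero_add]
    exact le_add_self
  rcases le_total 0 x with hx | hx
  · have hneg : -x ≤ 0 := EReal.neg_le.1 (by simpa using hx)
    rw [EReal.toENNReal_add hx ha', EReal.toENNReal_of_nonpos hneg, add_zero]
    exact le_self_add
  · induction x with
    | bot => simp at hxa
    | top => simp at hx
    | coe x =>
      norm_cast at hxa hx ⊢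
      simp only [EReal.real_coe_toENNReal]
      rw [← ENNReal.ofReal_add (by linarith) (by linarith)]
      simp [ENNReal.ofReal_of_nonpos hx]

lemma truncAbove_eq_neg_truncBelow {Ω : Type*} (g : Ω → EReal) (α : ℝ) (ω : Ω) :
    truncAbove g α ω = -truncBelow (fun ω => -g ω) (-α) ω := by
  simp only [truncBelow, truncAbove, EReal.coe_neg, EReal.neg_le_neg_iff]
  split_ifs <;> simp

lemma truncBelow_nonpos {Ω : Type*} {g : Ω → EReal} {α : ℝ} (hα : α ≤ 0) (ω : Ω) :
    truncBelow g α ω ≤ 0 := by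
  rw [truncBelow]
  split_ifs with h
  · exact h.trans (EReal.coe_nonpos.2 hα)
  · exact le_rfl

variable {Ω : Type*} [MeasurableSpace Ω] {P : Measure Ω} {f g : Ω → EReal}

lemma EIntegrable.neg (hg : EIntegrable P g) : EIntegrable P fun ω => -g ω :=
  ⟨measurable_neg.comp_aemeasurable hg.1, hg.2.2, by simpa only [neg_neg] using hg.2.1⟩

lemma EIntegrable.eintegral_neg (hg : EIntegrable P g) :
    eintegral P (fun ω => -g ω) = -eintegral P g := by
  rw [eintegral, eintegral, EReal.neg_sub (.inl (EReal.coe_ennreal_ne_bot _))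
    (.inl (EReal.coe_ennreal_eq_top_iff.not.2 hg.2.1.ne)), add_comm, sub_eq_add_neg]
  simp only [neg_neg]

lemma EIntegrable.eintegral_add_le [IsProbabilityMeasure P] (hg : EIntegrable P g) {a : ℝ}
    (ha : 0 ≤ a) : eintegral P g + a ≤ (∫⁻ ω, erealToENN (g ω + a) ∂P : ENNReal) := by
  have h : ∫⁻ ω, erealToENN (g ω) ∂P + ENNReal.ofReal a ≤
      ∫⁻ ω, erealToENN (g ω + a) ∂P + ∫⁻ ω, erealToENN (-g ω) ∂P := by
    calc _ = ∫⁻ ω, ((g ω).toENNReal + ENNReal.ofReal a) ∂P := by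
          rw [lintegral_add_right _ measurable_const, lintegral_const, measure_univ, mul_one]
          rfl
      _ ≤ ∫⁻ ω, ((g ω + a).toENNReal + (-g ω).toENNReal) ∂P :=
          lintegral_mono fun ω => toENNReal_add_ofReal_le ha (g ω)
      _ = _ := lintegral_add_right' _ hg.neg.1.ereal_toENNReal
  rw [eintegral, sub_eq_add_neg, add_right_comm, ← sub_eq_add_neg, EReal.sub_le_iff_le_add
    (.inl (EReal.coe_ennreal_ne_bot _)) (.inl (EReal.coe_ennreal_eq_top_iff.not.2 hg.2.2.ne))]
  rwa [← EReal.coe_ennreal_le_coe_ennreal_iff, EReal.coe_ennreal_add, EReal.coe_ennreal_add,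
    EReal.coe_ennreal_ofReal, max_eq_left ha] at h

lemma EIntegrable.lintegral_add_le [IsProbabilityMeasure P] (hg : EIntegrable P g) {a : ℝ}
    (ha : 0 ≤ a) : (∫⁻ ω, erealToENN (g ω + a) ∂P : ENNReal) ≤
      eintegral P g + a + (∫⁻ ω, erealToENN (-truncBelow g (-a) ω) ∂P : ENNReal) := by
  have h : ∫⁻ ω, erealToENN (g ω + a) ∂P + ∫⁻ ω, erealToENN (-g ω) ∂P ≤
      ∫⁻ ω, erealToENN (g ω) ∂P + ENNReal.ofReal a +
        ∫⁻ ω, erealToENN (-truncBelow g (-a) ω) ∂P := by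
    calc _ = ∫⁻ ω, ((g ω + a).toENNReal + (-g ω).toENNReal) ∂P :=
          (lintegral_add_right' _ hg.neg.1.ereal_toENNReal).symm
      _ ≤ ∫⁻ ω, ((g ω).toENNReal + ENNReal.ofReal a + (-truncBelow g (-a) ω).toENNReal) ∂P :=
          lintegral_mono fun ω => toENNReal_add_coe_le ha g ω
      _ = _ := by
          rw [lintegral_add_left' (hg.1.ereal_toENNReal.add_const _),
            lintegral_add_right _ measurable_const, lintegral_const, measure_univ, mul_one]
          rfl
  rw [eintegral, sub_eq_add_neg, add_right_comm _ (-_) (a : EReal), add_right_comm _ (-_),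
    ← sub_eq_add_neg, EReal.le_sub_iff_add_le (.inl (EReal.coe_ennreal_ne_bot _))
    (.inl (EReal.coe_ennreal_eq_top_iff.not.2 hg.2.2.ne))]
  rwa [← EReal.coe_ennreal_le_coe_ennreal_iff, EReal.coe_ennreal_add, EReal.coe_ennreal_add,
    EReal.coe_ennreal_add, EReal.coe_ennreal_ofReal, max_eq_left ha] at h

/-- Uniform smallness, eventually in `ν`, of the integrals of the negative parts of `F ν` below
`-a`. The condition is on the tails `F ν · 1{F ν ≤ -a}`, as in the paper's asymptotic
integrability conditions. -/
def AsympInfIntegrable (Pν : ℕ → Measure Ω) (F : ℕ → Ω → EReal) : Prop :=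
  ∀ ε : ℝ, 0 < ε → ∃ a : ℝ, 0 ≤ a ∧ ∀ᶠ ν in atTop,
    ((∫⁻ ω, erealToENN (-truncBelow (F ν) (-a) ω) ∂Pν ν : ENNReal) : EReal) ≤ ε

lemma continuous_toENNReal_add_coe (a : ℝ) : Continuous fun x : EReal => (x + a).toENNReal :=
  EReal.continuous_toENNReal.comp <| continuous_iff_continuousAt.2 fun _ =>
    (EReal.continuousAt_add (.inr (EReal.coe_ne_bot a)) (.inr (EReal.coe_ne_top a))).comp
      (continuousAt_id.prodMk continuousAt_const)

lemma toENNReal_add_coe_le_liminf {ι : Type*} {l : Filter ι} [l.NeBot] {u : ι → EReal}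
    {x : EReal} (h : x ≤ liminf u l) (a : ℝ) :
    (x + a).toENNReal ≤ liminf (fun i => (u i + a).toENNReal) l := by
  have hmono : Monotone fun x : EReal => (x + a).toENNReal := fun _ _ hxy =>
    EReal.toENNReal_le_toENNReal (add_le_add_left hxy _)
  exact (hmono h).trans_eq
    (hmono.map_liminf_of_continuousAt u (continuous_toENNReal_add_coe a).continuousAt)

variable {Pν : ℕ → Measure Ω} {F : ℕ → Ω → EReal}

lemma WeakConv.eintegral_add_le_liminf [TopologicalSpace Ω] [OpensMeasurableSpace Ω]
    [HasOuterApproxClosed Ω] [IsProbabilityMeasure P] [∀ ν, IsProbabilityMeasure (Pν ν)]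
    (h : WeakConv Pν P) (hf : EIntegrable P f) (hF : ∀ ν, AEMeasurable (F ν) (Pν ν))
    (hle : ∀ ω, f ω ≤ liminf (Function.uncurry F) (atTop ×ˢ 𝓝 ω)) {a : ℝ} (ha : 0 ≤ a) :
    eintegral P f + a ≤
      liminf (fun ν => ((∫⁻ ω, erealToENN (F ν ω + a) ∂Pν ν : ENNReal) : EReal)) atTop := by
  have hmeas := (continuous_toENNReal_add_coe a).measurable
  have hfatou := h.lintegral_le_liminf_lintegral (hmeas.comp_aemeasurable hf.1)
    (fun ν => hmeas.comp_aemeasurable (hF ν)) fun ω => toENNReal_add_coe_le_liminf (hle ω) a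
  calc eintegral P f + a ≤ (∫⁻ ω, erealToENN (f ω + a) ∂P : ENNReal) := hf.eintegral_add_le ha
    _ ≤ (liminf (fun ν => ∫⁻ ω, erealToENN (F ν ω + a) ∂Pν ν) atTop : ENNReal) :=
        EReal.coe_ennreal_le_coe_ennreal_iff.2 hfatou
    _ = _ := EReal.coe_ennreal_strictMono.monotone.map_liminf_of_continuousAt _
        continuous_coe_ennreal_ereal.continuousAt

lemma WeakConv.eintegral_le_liminf_eintegral [TopologicalSpace Ω] [OpensMeasurableSpace Ω]
    [HasOuterApproxClosed Ω] [IsProbabilityMeasure P] [∀ ν, IsProbabilityMeasure (Pν ν)]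
    (h : WeakConv Pν P) (hf : EIntegrable P f) (hF : ∀ ν, EIntegrable (Pν ν) (F ν))
    (hle : ∀ ω, f ω ≤ liminf (Function.uncurry F) (atTop ×ˢ 𝓝 ω))
    (htail : AsympInfIntegrable Pν F) :
    eintegral P f ≤ liminf (fun ν => eintegral (Pν ν) (F ν)) atTop := by
  refine le_of_forall_lt fun c hc => ?_
  obtain ⟨k', hck', hk'⟩ := EReal.lt_iff_exists_real_btwn.1 hc
  obtain ⟨k, hck, hkk'⟩ := EReal.lt_iff_exists_real_btwn.1 hck'
  obtain ⟨a, ha, htail⟩ := htail (k' - k) (sub_pos.2 (EReal.coe_lt_coe_iff.1 hkk'))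
  have hlt := (EReal.add_lt_add_right_coe hk' a).trans_le
    (h.eintegral_add_le_liminf hf (fun ν => (hF ν).1) hle ha)
  refine hck.trans_le (le_liminf_of_le (by isBoundedDefault) ?_)
  filter_upwards [eventually_lt_of_lt_liminf hlt, htail] with ν hν hν'
  refine (EReal.addLECancellable_coe (a + (k' - k))).add_le_add_iff_right.1 ?_
  calc (k : EReal) + (a + (k' - k) : ℝ) = (k' : EReal) + a := by norm_cast; ring
    _ ≤ eintegral (Pν ν) (F ν) + a +
          (∫⁻ ω, erealToENN (-truncBelow (F ν) (-a) ω) ∂Pν ν : ENNReal) :=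
        hν.le.trans ((hF ν).lintegral_add_le ha)
    _ ≤ eintegral (Pν ν) (F ν) + a + (k' - k : ℝ) := add_le_add_right hν' _
    _ = _ := by rw [EReal.coe_add, add_assoc]

lemma eintegral_truncBelow (g : Ω → EReal) {α : ℝ} (hα : α ≤ 0) :
    eintegral P (truncBelow g α) = -(∫⁻ ω, erealToENN (-truncBelow g α ω) ∂P : ENNReal) := by
  have h (ω : Ω) : erealToENN (truncBelow g α ω) = 0 :=
    EReal.toENNReal_of_nonpos (truncBelow_nonpos hα ω)
  simp only [eintegral, h, lintegral_zero, EReal.coe_ennreal_zero, zero_sub]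

lemma eintegral_truncAbove (g : Ω → EReal) {α : ℝ} (hα : 0 ≤ α) :
    eintegral P (truncAbove g α) =
      (∫⁻ ω, erealToENN (-truncBelow (fun ω => -g ω) (-α) ω) ∂P : ENNReal) := by
  have h (ω : Ω) : erealToENN (truncBelow (fun ω => -g ω) (-α) ω) = 0 :=
    EReal.toENNReal_of_nonpos (truncBelow_nonpos (neg_nonpos.2 hα) ω)
  simp only [eintegral, truncAbove_eq_neg_truncBelow, neg_neg, h, lintegral_zero,
    EReal.coe_ennreal_zero, sub_zero]

lemma liminfNuX_le_liminf {E : Type*} [PseudoMetricSpace E] {X : Set E} {x : E} (hx : x ∈ X)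
    (h : ℕ → E → EReal) : liminfNuX X x h ≤ liminf (fun ν => h ν x) atTop := by
  refine iSup₂_le fun δ hδ => iSup_le fun N => le_liminf_of_le (by isBoundedDefault) ?_
  filter_upwards [eventually_ge_atTop N] with ν hν
  exact (iInf₂_le ν hν).trans ((iInf₂_le x hx).trans (iInf_le _ (by simpa using hδ.le)))

lemma asympInfIntegrable_of_liminfAlphaBot_eq_zero {E : Type*} [PseudoMetricSpace E] {X : Set E}
    {x : E} (hx : x ∈ X) {h : ℕ → E → Ω → EReal}
    (hh : liminfAlphaBot (fun α => liminfNuX X x fun ν x =>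
      eintegral (Pν ν) (truncBelow (h ν x) α)) = 0) :
    AsympInfIntegrable Pν fun ν => h ν x := by
  intro ε hε
  have hlt : ((-ε : ℝ) : EReal) < liminfAlphaBot (fun α => liminfNuX X x fun ν x =>
      eintegral (Pν ν) (truncBelow (h ν x) α)) := by
    rw [hh]; exact EReal.coe_neg'.2 (neg_lt_zero.2 hε)
  obtain ⟨α, hα⟩ := lt_iSup_iff.1 hlt
  refine ⟨-min α 0, by simp, ?_⟩
  have hlim := (hα.trans_le (iInf₂_le (min α 0) (min_le_left α 0))).trans_le
    (liminfNuX_le_liminf hx _)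
  filter_upwards [eventually_lt_of_lt_liminf hlim] with ν hν
  rw [eintegral_truncBelow _ (min_le_right α 0), EReal.coe_neg, EReal.neg_lt_neg_iff] at hν
  rw [neg_neg]
  exact hν.le

lemma limsupNu_eq_limsup (h : ℕ → EReal) : limsupNu h = limsup h atTop :=
  limsup_eq_iInf_iSup_of_nat.symm

lemma asympInfIntegrable_neg_of_limsupAlphaTop_eq_zero {h : ℕ → Ω → EReal}
    (hh : limsupAlphaTop (fun α => limsupNu fun ν =>
      eintegral (Pν ν) (truncAbove (h ν) α)) = 0) :
    AsympInfIntegrable Pν fun ν ω => -h ν ω := by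
  intro ε hε
  have hlt : limsupAlphaTop (fun α => limsupNu fun ν =>
      eintegral (Pν ν) (truncAbove (h ν) α)) < (ε : EReal) := by
    rw [hh]; exact EReal.coe_pos.2 hε
  obtain ⟨α, hα⟩ := iInf_lt_iff.1 hlt
  refine ⟨max α 0, le_max_right α 0, ?_⟩
  have hlim : limsupNu (fun ν => eintegral (Pν ν) (truncAbove (h ν) (max α 0))) < ε :=
    (le_iSup₂ (f := fun β _ => limsupNu fun ν => eintegral (Pν ν) (truncAbove (h ν) β))
      (max α 0) (le_max_left α 0)).trans_lt hα
  rw [limsupNu_eq_limsup] at hlim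
  filter_upwards [eventually_lt_of_limsup_lt hlim] with ν hν
  rw [eintegral_truncAbove _ (le_max_right α 0)] at hν
  exact hν.le

end ExtendedIntegral

section AttouchWets

/-- The absolute difference at `z` of the distance functions of `A` and `B`, whose uniform size on
balls is what the Attouch–Wets distance measures. -/
def distGap {α : Type*} [PseudoMetricSpace α] (A B : Set α) (z : α) : ℝ :=
  |Metric.infDist z A - Metric.infDist z B|

/-- The `ρ`-distance of `A` and `B`: the largest `distGap` over the closed ball of radius `ρ`
around the centre `c`. -/
def ballDistGap {α : Type*} [PseudoMetricSpace α] (A B : Set α) (c : α) (ρ : ℝ) : ℝ :=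
  sSup (distGap A B '' Metric.closedBall c ρ)

section BallDistGap

variable {α : Type*} [PseudoMetricSpace α] {A B : Set α} {c : α}

lemma distGap_le_add_two_mul_dist (z : α) : distGap A B z ≤ distGap A B c + 2 * dist z c := by
  have hA := abs_le.1 ((Metric.lipschitz_infDist_pt A).dist_le_mul z c)
  have hB := abs_le.1 ((Metric.lipschitz_infDist_pt B).dist_le_mul z c)
  have hc := abs_le.1 (le_refl (distGap A B c))
  rw [NNReal.coe_one, one_mul] at hA hB
  exact abs_le.2 ⟨by linarith, by linarith⟩

lemma bddAbove_distGap_image_closedBall (ρ : ℝ) :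
    BddAbove (distGap A B '' Metric.closedBall c ρ) := by
  refine ⟨distGap A B c + 2 * ρ, ?_⟩
  rintro _ ⟨z, hz, rfl⟩
  exact (distGap_le_add_two_mul_dist z).trans (by gcongr; exact hz)

lemma distGap_le_ballDistGap {z : α} {ρ : ℝ} (hz : dist z c ≤ ρ) :
    distGap A B z ≤ ballDistGap A B c ρ :=
  le_csSup (bddAbove_distGap_image_closedBall ρ) ⟨z, hz, rfl⟩

lemma ballDistGap_nonneg (ρ : ℝ) : 0 ≤ ballDistGap A B c ρ :=
  Real.sSup_nonneg (by rintro _ ⟨z, -, rfl⟩; exact abs_nonneg _)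

lemma ballDistGap_le {ρ : ℝ} (hρ : 0 ≤ ρ) : ballDistGap A B c ρ ≤ distGap A B c + 2 * ρ := by
  refine Real.sSup_le ?_ (add_nonneg (abs_nonneg _) (by positivity))
  rintro _ ⟨z, hz, rfl⟩
  exact (distGap_le_add_two_mul_dist z).trans (by gcongr; exact hz)

lemma ballDistGap_mono : Monotone (ballDistGap A B c) := by
  refine fun ρ ρ' h => Real.sSup_le ?_ (ballDistGap_nonneg ρ')
  rintro _ ⟨z, hz, rfl⟩
  exact distGap_le_ballDistGap (hz.trans h)

lemma integrableOn_ballDistGap_mul_exp_neg :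
    IntegrableOn (fun ρ => ballDistGap A B c ρ * Real.exp (-ρ)) (Ioi 0) := by
  have hexp : IntegrableOn (fun ρ => (distGap A B c + 4) * Real.exp (-(1 / 2) * ρ)) (Ioi 0) :=
    (exp_neg_integrableOn_Ioi 0 one_half_pos).const_mul _
  refine hexp.mono' (ballDistGap_mono.measurable.mul (by fun_prop)).aestronglyMeasurable <|
    (ae_restrict_iff' measurableSet_Ioi).2 <| .of_forall fun ρ (hρ : 0 < ρ) => ?_
  rw [Real.norm_of_nonneg (mul_nonneg (ballDistGap_nonneg ρ) (Real.exp_nonneg _))]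
  have hlin : ballDistGap A B c ρ ≤ (distGap A B c + 4) * Real.exp (ρ / 2) := by
    have hc : 0 ≤ distGap A B c := abs_nonneg _
    nlinarith [ballDistGap_le (A := A) (B := B) (c := c) hρ.le, Real.add_one_le_exp (ρ / 2)]
  calc ballDistGap A B c ρ * Real.exp (-ρ)
      ≤ (distGap A B c + 4) * Real.exp (ρ / 2) * Real.exp (-ρ) := by gcongr
    _ = _ := by rw [mul_assoc, ← Real.exp_add]; ring_nf

lemma distGap_le_exp_mul_integral (z : α) : distGap A B z ≤
    Real.exp (dist z c) * ∫ ρ in Ioi 0, ballDistGap A B c ρ * Real.exp (-ρ) := by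
  have hsub : Ioi (dist z c) ⊆ Ioi 0 := Ioi_subset_Ioi dist_nonneg
  have hexp : IntegrableOn (fun ρ => Real.exp (-ρ)) (Ioi (dist z c)) := by
    simpa using exp_neg_integrableOn_Ioi (dist z c) one_pos
  rw [← inv_mul_le_iff₀ (Real.exp_pos _), ← Real.exp_neg]
  calc Real.exp (-dist z c) * distGap A B z
      = ∫ ρ in Ioi (dist z c), distGap A B z * Real.exp (-ρ) := by
        rw [integral_const_mul, integral_exp_neg_Ioi, mul_comm]
    _ ≤ ∫ ρ in Ioi (dist z c), ballDistGap A B c ρ * Real.exp (-ρ) :=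
        setIntegral_mono_on (hexp.const_mul _)
          (integrableOn_ballDistGap_mul_exp_neg.mono_set hsub) measurableSet_Ioi fun ρ hρ =>
            mul_le_mul_of_nonneg_right (distGap_le_ballDistGap (le_of_lt hρ)) (Real.exp_nonneg _)
    _ ≤ _ := setIntegral_mono_set integrableOn_ballDistGap_mul_exp_neg
        (.of_forall fun ρ => mul_nonneg (ballDistGap_nonneg ρ) (Real.exp_nonneg _))
        hsub.eventuallyLE

end BallDistGap

variable {E : Type*} [PseudoMetricSpace E] {X : Set E} {f g : E → EReal}

lemma distGap_epiSet_le_awDist (zc z : E × ℝ) :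
    distGap (epiSet X f) (epiSet X g) z ≤ Real.exp (dist z zc) * awDist X zc f g :=
  distGap_le_exp_mul_integral z

lemma awDist_self (zc : E × ℝ) : awDist X zc f f = 0 := by
  have h (ρ : ℝ) : ballDistGap (epiSet X f) (epiSet X f) zc ρ = 0 :=
    le_antisymm (Real.sSup_nonpos (by rintro _ ⟨z, -, rfl⟩; simp [distGap])) (ballDistGap_nonneg ρ)
  calc awDist X zc f f
      = ∫ ρ in Ioi 0, ballDistGap (epiSet X f) (epiSet X f) zc ρ * Real.exp (-ρ) := rfl
    _ = 0 := by simp only [h, zero_mul, integral_zero]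

lemma awDist_congr_right (zc : E × ℝ) {g' : E → EReal} (h : EqOn g g' X) :
    awDist X zc f g = awDist X zc f g' := by
  have hepi : epiSet X g = epiSet X g' :=
    ext fun p => and_congr_right fun hp => by rw [h hp]
  rw [awDist, awDist, hepi]

lemma epiSet_nonempty (hf : LscFcnOn X f) : (epiSet X f).Nonempty := by
  obtain ⟨x, hx, hfx⟩ := hf.2
  exact ⟨(x, (f x).toReal), hx, EReal.le_coe_toReal hfx⟩

lemma isClosed_epiSet (hX : IsClosed X) (hf : LowerSemicontinuousOn f X) :
    IsClosed (epiSet X f) :=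
  ((lowerSemicontinuousOn_iff_isClosed_epigraph hX).1 hf).preimage
    (continuous_id.prodMap continuous_coe_real_ereal)

lemma tendsto_infDist_epiSet {F : ℕ → E → EReal} {zc : E × ℝ}
    (h : Tendsto (fun ν => awDist X zc (F ν) f) atTop (𝓝 0)) (z : E × ℝ) :
    Tendsto (fun ν => Metric.infDist z (epiSet X (F ν))) atTop
      (𝓝 (Metric.infDist z (epiSet X f))) :=
  tendsto_iff_dist_tendsto_zero.2 <| squeeze_zero (fun _ => dist_nonneg)
    (fun _ => distGap_epiSet_le_awDist zc z) (by simpa using h.const_mul (Real.exp (dist z zc)))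

lemma exists_seq_forall_mem_tendsto {α : Type*} {l : Filter α} [l.IsCountablyGenerated]
    {S : ℕ → Set α} (hS : ∀ ν, (S ν).Nonempty) (h : ∀ t ∈ l, ∀ᶠ ν in atTop, (S ν ∩ t).Nonempty) :
    ∃ u : ℕ → α, (∀ ν, u ν ∈ S ν) ∧ Tendsto u atTop l := by
  classical
  obtain ⟨t, ht⟩ := l.exists_antitone_basis
  let T (j : ℕ) : Set α := {p | 0 < j → p ∈ t j}
  let j (ν : ℕ) : ℕ := Nat.findGreatest (fun j => (S ν ∩ T j).Nonempty) ν
  have hj (ν : ℕ) : (S ν ∩ T (j ν)).Nonempty :=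
    Nat.findGreatest_spec (P := fun j => (S ν ∩ T j).Nonempty) ν.zero_le
      ((hS ν).mono fun p hp => ⟨hp, fun h0 => absurd h0 (lt_irrefl 0)⟩)
  choose u hu using hj
  refine ⟨u, fun ν => (hu ν).1, (ht.1.tendsto_right_iff).2 fun i _ => ?_⟩
  filter_upwards [h _ (ht.mem (i + 1)), eventually_ge_atTop (i + 1)] with ν hν hle
  have hij : i + 1 ≤ j ν := Nat.le_findGreatest hle (hν.mono fun p hp => ⟨hp.1, fun _ => hp.2⟩)
  exact ht.2 (i.le_succ.trans hij) ((hu ν).2 (i.succ_pos.trans_le hij))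

variable {F : ℕ → E → EReal}

lemma le_liminf_of_tendsto_infDist_epiSet (hX : IsClosed X) (hf : LscFcnOn X f)
    (h : ∀ p, Tendsto (fun ν => Metric.infDist p (epiSet X (F ν))) atTop
      (𝓝 (Metric.infDist p (epiSet X f))))
    {z : E} {zs : ℕ → E} (hzs : ∀ ν, zs ν ∈ X) (hlim : Tendsto zs atTop (𝓝 z)) :
    f z ≤ liminf (fun ν => F ν (zs ν)) atTop := by
  refine le_of_forall_lt fun c hc => ?_
  obtain ⟨k, hck, hk⟩ := EReal.lt_iff_exists_real_btwn.1 hc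
  refine hck.trans_le (le_liminf_of_le (by isBoundedDefault) ?_)
  have hpos : 0 < Metric.infDist (z, k) (epiSet X f) :=
    ((isClosed_epiSet hX hf.1).notMem_iff_infDist_pos (epiSet_nonempty hf)).1
      fun hmem => hk.not_ge hmem.2
  have hdist : Tendsto (fun ν => dist (z, k) (zs ν, k)) atTop (𝓝 0) := by
    simpa [dist_comm z] using tendsto_iff_dist_tendsto_zero.1 hlim
  filter_upwards [hdist.eventually_lt (h (z, k)) hpos] with ν hν
  by_contra hlt
  exact hν.not_ge (Metric.infDist_le_dist_of_mem ⟨hzs ν, (not_le.1 hlt).le⟩)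

lemma eventually_inter_epiSet_nonempty (hF : ∀ ν, LscFcnOn X (F ν))
    (h : ∀ p, Tendsto (fun ν => Metric.infDist p (epiSet X (F ν))) atTop
      (𝓝 (Metric.infDist p (epiSet X f))))
    {p : E × ℝ} (hp : p ∈ epiSet X f) {t : Set (E × ℝ)} (ht : t ∈ 𝓝 p) :
    ∀ᶠ ν in atTop, (epiSet X (F ν) ∩ t).Nonempty := by
  obtain ⟨ε, hε, hball⟩ := Metric.mem_nhds_iff.1 ht
  have hlim := h p
  rw [Metric.infDist_zero_of_mem hp] at hlim
  filter_upwards [hlim.eventually_lt_const hε] with ν hν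
  obtain ⟨q, hq, hqp⟩ := (Metric.infDist_lt_iff (epiSet_nonempty (hF ν))).1 hν
  exact ⟨q, hq, hball (Metric.mem_ball'.2 hqp)⟩

lemma exists_tendsto_limsup_le_of_tendsto_infDist_epiSet (hF : ∀ ν, LscFcnOn X (F ν))
    (h : ∀ p, Tendsto (fun ν => Metric.infDist p (epiSet X (F ν))) atTop
      (𝓝 (Metric.infDist p (epiSet X f))))
    {z : E} (hz : z ∈ X) :
    ∃ zs : ℕ → E, (∀ ν, zs ν ∈ X) ∧ Tendsto zs atTop (𝓝 z) ∧
      limsup (fun ν => F ν (zs ν)) atTop ≤ f z := by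
  let S (ν : ℕ) : Set (E × EReal) := {q | q.1 ∈ X ∧ F ν q.1 ≤ q.2}
  have hmeet : ∀ t ∈ 𝓝 (z, f z), ∀ᶠ ν in atTop, (S ν ∩ t).Nonempty := by
    intro t ht
    rcases eq_or_ne (f z) ⊤ with htop | htop
    · exact .of_forall fun ν => ⟨(z, ⊤), ⟨hz, le_top⟩, htop ▸ mem_of_mem_nhds ht⟩
    obtain ⟨u, hu, hIco⟩ := exists_Ico_subset_of_mem_nhds
      ((Continuous.prodMk_right z).continuousAt (eventually_mem_nhds_iff.2 ht))
      ⟨⊤, lt_top_iff_ne_top.2 htop⟩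
    obtain ⟨r, hfr, hru⟩ := EReal.lt_iff_exists_real_btwn.1 hu
    have hcoe : Continuous (Prod.map id (↑) : E × ℝ → E × EReal) :=
      continuous_id.prodMap continuous_coe_real_ereal
    filter_upwards [eventually_inter_epiSet_nonempty hF h (p := (z, r)) ⟨hz, hfr.le⟩
      (hcoe.continuousAt (hIco ⟨hfr.le, hru⟩))] with ν ⟨q, hq, hqt⟩
    exact ⟨(q.1, q.2), hq, hqt⟩
  obtain ⟨u, huS, hu⟩ := exists_seq_forall_mem_tendsto
    (fun ν => ⟨(z, ⊤), hz, le_top⟩ : ∀ ν, (S ν).Nonempty) hmeet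
  refine ⟨fun ν => (u ν).1, fun ν => (huS ν).1, (continuous_fst.tendsto _).comp hu, ?_⟩
  calc limsup (fun ν => F ν (u ν).1) atTop
      ≤ limsup (fun ν => (u ν).2) atTop := limsup_le_limsup (.of_forall fun ν => (huS ν).2)
    _ = f z := ((continuous_snd.tendsto _).comp hu).limsup_eq

lemma epiConvergesOn_of_tendsto_awDist (hX : IsClosed X) {zc : E × ℝ}
    (hF : ∀ ν, LscFcnOn X (F ν)) (hf : LscFcnOn X f)
    (h : Tendsto (fun ν => awDist X zc (F ν) f) atTop (𝓝 0)) : EpiConvergesOn X F f :=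
  fun _ hz => ⟨fun _ => le_liminf_of_tendsto_infDist_epiSet hX hf (tendsto_infDist_epiSet h),
    exists_tendsto_limsup_le_of_tendsto_infDist_epiSet hF (tendsto_infDist_epiSet h) hz⟩

end AttouchWets

section EpiConvergence

lemma extend_const_mem {ι κ α : Type*} {ψ : ι → κ} {u : ι → α} {a : α} {s : Set α}
    (hu : ∀ i, u i ∈ s) (ha : a ∈ s) (k : κ) : Function.extend ψ u (fun _ => a) k ∈ s := by
  classical
  rw [Function.extend]
  split_ifs
  exacts [hu _, ha]

lemma tendsto_extend_const {ι κ α : Type*} {ψ : ι → κ} (hψ : ψ.Injective) {l : Filter α} {a : α}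
    (ha : pure a ≤ l) {u : ι → α} (hu : Tendsto u cofinite l) :
    Tendsto (Function.extend ψ u fun _ => a) cofinite l := by
  intro s hs
  refine mem_map.2 (mem_cofinite.2 (((mem_cofinite.1 (hu hs)).image ψ).subset fun k hk => ?_))
  by_cases hkψ : ∃ i, ψ i = k
  · obtain ⟨i, rfl⟩ := hkψ
    rw [mem_compl_iff, mem_preimage, hψ.extend_apply] at hk
    exact ⟨i, hk, rfl⟩
  · rw [mem_compl_iff, mem_preimage, Function.extend_apply' _ _ _ hkψ] at hk
    exact absurd (ha hs) hk

lemma liminf_uncurry_le_liminf_uncurry_comp {ι E S : Type*} {l : Filter ι} [TopologicalSpace E]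
    [TopologicalSpace S] {F : ι → E → EReal} {Z : Set E} {m : S → E} {T : Set S} {s : S}
    (hm : ContinuousWithinAt m T s) (hmaps : MapsTo m T Z) :
    liminf (Function.uncurry F) (l ×ˢ 𝓝[Z] (m s)) ≤
      liminf (Function.uncurry fun i w => F i (m w)) (l ×ˢ 𝓝[T] s) :=
  liminf_le_liminf_of_le (tendsto_id.prodMap (hm.tendsto_nhdsWithin hmaps))

lemma EpiConvergesOn.le_liminf {E : Type*} [TopologicalSpace E] [FirstCountableTopology E]
    {Z : Set E} {F : ℕ → E → EReal} {f : E → EReal} (h : EpiConvergesOn Z F f) {z : E}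
    (hz : z ∈ Z) : f z ≤ liminf (Function.uncurry F) (atTop ×ˢ 𝓝[Z] z) := by
  by_contra! hlt
  obtain ⟨c, hlc, hcf⟩ := exists_between hlt
  obtain ⟨q, hq, hqc⟩ := exists_seq_forall_of_frequently <|
    (frequently_lt_of_liminf_lt (by isBoundedDefault) hlc).and_eventually
      (tendsto_snd.eventually eventually_mem_nhdsWithin)
  obtain ⟨θ, hθ, hψ⟩ := strictMono_subseq_of_tendsto_atTop (tendsto_fst.comp hq)
  let u (k : ℕ) : E := (q (θ k)).2
  have hu : Tendsto u atTop (𝓝 z) :=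
    ((tendsto_snd.comp hq).comp hθ.tendsto_atTop).mono_right nhdsWithin_le_nhds
  rw [← Nat.cofinite_eq_atTop] at hu
  have hlim := tendsto_extend_const hψ.injective (pure_le_nhds z) hu
  rw [Nat.cofinite_eq_atTop] at hlim
  have hle := (h z hz).1 _ (extend_const_mem (fun k => (hqc (θ k)).2) hz) hlim
  obtain ⟨k, hk⟩ :=
    (hψ.tendsto_atTop.eventually (eventually_lt_of_lt_liminf (hcf.trans_le hle))).exists
  rw [hψ.injective.extend_apply] at hk
  exact hk.not_gt (hqc (θ k)).1

variable {E : Type*} [PseudoMetricSpace E] {Z : Set E} {F : ℕ → E → EReal} {f : E → EReal} {z : E}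

lemma EquiLscOn.eventually_lt (h : EquiLscOn Z F) (hz : z ∈ Z) {c d : EReal} (hcd : c < d) :
    ∀ᶠ p in atTop ×ˢ 𝓝[Z] z, d < F p.1 z → c < F p.1 p.2 := by
  rcases h z hz with hbot | hequi
  · have hlt := eventually_lt_of_limsup_lt (hbot.trans_lt (bot_le.trans_lt hcd))
    exact (tendsto_fst.eventually hlt).mono fun p hp hd => absurd hd hp.not_gt
  obtain ⟨k, hck, hkd⟩ := EReal.lt_iff_exists_real_btwn.1 hcd
  obtain ⟨k', hkk', hk'd⟩ := EReal.lt_iff_exists_real_btwn.1 hkd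
  rw [EReal.coe_lt_coe_iff] at hkk'
  obtain ⟨N, δ, hδ, hN⟩ := hequi (|k| + 1) (k' - k) (by positivity) (sub_pos.2 hkk')
  have hball : ∀ᶠ w in 𝓝[Z] z, w ∈ Z ∧ dist w z ≤ δ :=
    eventually_mem_nhdsWithin.and (nhdsWithin_le_nhds (Metric.closedBall_mem_nhds z hδ))
  filter_upwards [(eventually_ge_atTop N).prod_mk hball] with p ⟨hp, hpZ, hpδ⟩ hd
  calc c < k := hck
    _ ≤ min (F p.1 z - (k' - k : ℝ)) (|k| + 1 : ℝ) := by
        refine le_min ?_ (EReal.coe_le_coe_iff.2 (by linarith [le_abs_self k]))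
        calc (k : EReal) = k' - (k' - k : ℝ) := by norm_cast; ring
          _ ≤ F p.1 z - (k' - k : ℝ) := EReal.sub_le_sub (hk'd.trans hd).le le_rfl
    _ ≤ F p.1 p.2 := (hN p.1 hp).trans ((iInf₂_le p.2 hpZ).trans (iInf_le _ hpδ))

lemma EquiLscOn.liminf_le_liminf_uncurry (h : EquiLscOn Z F) (hz : z ∈ Z) :
    liminf (fun ν => F ν z) atTop ≤ liminf (Function.uncurry F) (atTop ×ˢ 𝓝[Z] z) := by
  refine le_of_forall_lt fun b hb => ?_
  obtain ⟨c, hbc, hc⟩ := exists_between hb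
  obtain ⟨d, hcd, hd⟩ := exists_between hc
  refine hbc.trans_le (le_liminf_of_le (by isBoundedDefault) ?_)
  filter_upwards [h.eventually_lt hz hcd,
    tendsto_fst.eventually (eventually_lt_of_lt_liminf hd)] with p hp hpd
  exact (hp hpd).le

lemma EpiConvergesOn.tendsto (h : EpiConvergesOn Z F f) (he : EquiLscOn Z F) (hz : z ∈ Z) :
    Tendsto (fun ν => F ν z) atTop (𝓝 (f z)) := by
  refine tendsto_of_le_liminf_of_limsup_le
    ((h z hz).1 (fun _ => z) (fun _ => hz) tendsto_const_nhds) ?_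
  obtain ⟨zs, hzs, hlim, hsup⟩ := (h z hz).2
  refine (le_of_forall_lt fun b hb => ?_).trans hsup
  obtain ⟨c, hbc, hc⟩ := exists_between hb
  obtain ⟨d, hcd, hd⟩ := exists_between hc
  have hgraph : Tendsto (fun ν => (ν, zs ν)) atTop (atTop ×ˢ 𝓝[Z] z) :=
    tendsto_id.prodMk (tendsto_nhdsWithin_iff.2 ⟨hlim, .of_forall hzs⟩)
  have hfreq : ∃ᶠ ν in atTop, d < F ν z := frequently_lt_of_lt_limsup (by isBoundedDefault) hd
  refine hbc.trans_le (le_limsup_of_frequently_le ?_ (by isBoundedDefault))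
  exact (hfreq.and_eventually (hgraph.eventually (he.eventually_lt hz hcd))).mono
    fun ν hν => (hν.2 hν.1).le

lemma EquiLscOn.slice_right {Ω : Type*} [PseudoMetricSpace Ω] {T : Set Ω}
    {G : ℕ → E × Ω → EReal} (h : EquiLscOn (Z ×ˢ T) G) (hz : z ∈ Z) :
    EquiLscOn T fun ν ω => G ν (z, ω) := by
  refine fun ω hω => (h (z, ω) ⟨hz, hω⟩).imp_right fun hequi ρ ε hρ hε => ?_
  obtain ⟨N, δ, hδ, hN⟩ := hequi ρ ε hρ hε
  refine ⟨N, δ, hδ, fun ν hν => (hN ν hν).trans (le_iInf₂ fun w hw => le_iInf fun hd => ?_)⟩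
  exact (iInf₂_le (z, w) ⟨hz, hw⟩).trans (iInf_le _ (by simpa [Prod.dist_eq, hδ.le] using hd))

lemma WeakConv.tendsto_eintegral {Ω : Type*} [PseudoMetricSpace Ω] [MeasurableSpace Ω]
    [OpensMeasurableSpace Ω] {P : Measure Ω} {Pν : ℕ → Measure Ω} [IsProbabilityMeasure P]
    [∀ ν, IsProbabilityMeasure (Pν ν)] (h : WeakConv Pν P) {G : ℕ → Ω → EReal} {g : Ω → EReal}
    (hg : EIntegrable P g) (hG : ∀ ν, EIntegrable (Pν ν) (G ν))
    (hlim : ∀ ω, Tendsto (fun ν => G ν ω) atTop (𝓝 (g ω)))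
    (hlsc : EquiLscOn univ G) (husc : EquiUscOn univ G)
    (hinf : AsympInfIntegrable Pν G) (hsup : AsympInfIntegrable Pν fun ν ω => -G ν ω) :
    Tendsto (fun ν => eintegral (Pν ν) (G ν)) atTop (𝓝 (eintegral P g)) := by
  refine tendsto_of_le_liminf_of_limsup_le
    (h.eintegral_le_liminf_eintegral hg hG (fun ω => ?_) hinf) ?_
  · rw [← (hlim ω).liminf_eq, ← nhdsWithin_univ]
    exact hlsc.liminf_le_liminf_uncurry (mem_univ ω)
  · have hneg := h.eintegral_le_liminf_eintegral hg.neg (fun ν => (hG ν).neg) (fun ω => ?_) hsup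
    · simp only [hg.eintegral_neg, fun ν => (hG ν).eintegral_neg] at hneg
      rwa [← Pi.neg_def, EReal.liminf_neg, EReal.neg_le_neg_iff] at hneg
    · rw [← ((continuous_neg.tendsto _).comp (hlim ω)).liminf_eq, ← nhdsWithin_univ]
      exact EquiLscOn.liminf_le_liminf_uncurry husc (mem_univ ω)

end EpiConvergence

section ParametricMinimization

variable {ι E : Type*} {l : Filter ι} {K : Set E} {G : ι → E → EReal} {g : E → EReal}

lemma limsup_iInf_le_iInf (hle : ∀ y ∈ K, limsup (fun i => G i y) l ≤ g y) :
    limsup (fun i => ⨅ y ∈ K, G i y) l ≤ ⨅ y ∈ K, g y :=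
  le_iInf₂ fun y hy =>
    (limsup_le_limsup (.of_forall fun _ => iInf₂_le y hy)).trans (hle y hy)

variable [TopologicalSpace E]

lemma iInf_le_liminf_iInf_of_isCompact (hK : IsCompact K)
    (hle : ∀ y ∈ K, g y ≤ liminf (Function.uncurry G) (l ×ˢ 𝓝[K] y)) :
    ⨅ y ∈ K, g y ≤ liminf (fun i => ⨅ y ∈ K, G i y) l := by
  refine le_of_forall_lt fun b hb => ?_
  obtain ⟨c, hbc, hc⟩ := exists_between hb
  have hnhds : ∀ᶠ p in l ×ˢ 𝓝ˢ K, p.2 ∈ K → c < G p.1 p.2 := by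
    refine hK.mem_prod_nhdsSet_of_forall fun y hy => ?_
    obtain ⟨A, hA, B, hB, hAB⟩ := eventually_prod_iff.1 <|
      eventually_lt_of_lt_liminf (hc.trans_le ((iInf₂_le y hy).trans (hle y hy)))
    exact (hA.prod_mk (eventually_nhdsWithin_iff.1 hB)).mono fun p hp hpK => hAB hp.1 (hp.2 hpK)
  have hunif : ∀ᶠ i in l, ∀ y ∈ K, y ∈ K → c < G i y :=
    eventually_prod_principal_iff.1 (hnhds.filter_mono (prod_mono le_rfl principal_le_nhdsSet))
  refine hbc.trans_le (le_liminf_of_le (by isBoundedDefault) ?_)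
  exact hunif.mono fun i hi => le_iInf₂ fun y hy => (hi y hy hy).le

lemma lowerSemicontinuousOn_of_le_liminf_uncurry [l.NeBot]
    (hle : ∀ y ∈ K, g y ≤ liminf (Function.uncurry G) (l ×ˢ 𝓝[K] y))
    (hlim : ∀ y ∈ K, limsup (fun i => G i y) l ≤ g y) : LowerSemicontinuousOn g K := by
  intro y hy b hb
  obtain ⟨c, hbc, hc⟩ := exists_between hb
  obtain ⟨A, hA, B, hB, hAB⟩ :=
    eventually_prod_iff.1 (eventually_lt_of_lt_liminf (hc.trans_le (hle y hy)))
  filter_upwards [hB, eventually_mem_nhdsWithin] with w hw hwK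
  calc b < c := hbc
    _ ≤ limsup (fun i => G i w) l :=
        le_limsup_of_frequently_le (hA.mono fun i hi => (hAB hi hw).le).frequently
          (by isBoundedDefault)
    _ ≤ g w := hlim w hwK

lemma argminOn_nonempty [l.NeBot] (hK : IsCompact K) (hne : K.Nonempty)
    (hle : ∀ y ∈ K, g y ≤ liminf (Function.uncurry G) (l ×ˢ 𝓝[K] y))
    (hlim : ∀ y ∈ K, limsup (fun i => G i y) l ≤ g y) : (ArgminOn K g).Nonempty := by
  obtain ⟨y, hy, hmin⟩ :=
    (lowerSemicontinuousOn_of_le_liminf_uncurry hle hlim).exists_isMinOn hne hK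
  exact ⟨y, hy, fun _ hz => hmin hz⟩

lemma outerLimit_argminOn_subset (hK : IsClosed K) {G : ℕ → E → EReal}
    (hle : ∀ y ∈ K, g y ≤ liminf (Function.uncurry G) (atTop ×ˢ 𝓝[K] y))
    (hlim : ∀ y ∈ K, limsup (fun ν => G ν y) atTop ≤ g y) :
    OuterLimit (fun ν => ArgminOn K (G ν)) ⊆ ArgminOn K g := by
  rintro y ⟨ψ, hψ, s, hs, hsy⟩
  have hsK (κ : ℕ) : s κ ∈ K := (hs κ).1
  have hy : y ∈ K := hK.mem_of_tendsto hsy (.of_forall hsK)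
  have hgraph : Tendsto (fun κ => (ψ κ, s κ)) atTop (atTop ×ˢ 𝓝[K] y) :=
    hψ.tendsto_atTop.prodMk (tendsto_nhdsWithin_iff.2 ⟨hsy, .of_forall hsK⟩)
  refine ⟨hy, fun z hz => ?_⟩
  calc g y ≤ liminf (Function.uncurry G) (atTop ×ˢ 𝓝[K] y) := hle y hy
    _ ≤ liminf (fun κ => G (ψ κ) (s κ)) atTop := liminf_le_liminf_of_le hgraph
    _ ≤ liminf (fun κ => G (ψ κ) z) atTop :=
        liminf_le_liminf (.of_forall fun κ => (hs κ).2 z hz)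
    _ ≤ limsup (fun κ => G (ψ κ) z) atTop := liminf_le_limsup
    _ ≤ limsup (fun ν => G ν z) atTop :=
        limsup_le_limsup_of_le (u := fun ν => G ν z) hψ.tendsto_atTop
    _ ≤ g z := hlim z hz

end ParametricMinimization

section Bellman

lemma add_mul_le_liminf {ι : Type*} {l : Filter ι} [l.NeBot] {β : ℝ} (hβ : 0 ≤ β)
    {u v : ι → EReal} {a b : EReal} (ha : a ≤ liminf u l) (hb : b ≤ liminf v l) :
    a + β * b ≤ liminf (fun i => u i + β * v i) l :=
  calc a + β * b ≤ liminf u l + β * liminf v l := by gcongr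
    _ = liminf u l + liminf (fun i => β * v i) l := by
        rw [EReal.liminf_const_mul_of_nonneg_of_ne_top (EReal.coe_nonneg.2 hβ) (EReal.coe_ne_top β)]
    _ ≤ _ := EReal.le_liminf_add

lemma tendsto_add_mul {ι : Type*} {l : Filter ι} {β r : ℝ} {u : ι → ℝ} {v : ι → EReal}
    {w : EReal} (hu : Tendsto u l (𝓝 r)) (hv : Tendsto v l (𝓝 w)) :
    Tendsto (fun i => (u i : EReal) + β * v i) l (𝓝 (r + β * w)) := by
  have hmul : Tendsto (fun i => (β : EReal) * v i) l (𝓝 (β * w)) :=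
    EReal.Tendsto.const_mul hv (.inl (EReal.coe_ne_bot β)) (.inl (EReal.coe_ne_top β))
  have hadd : ContinuousAt (fun p : EReal × EReal => p.1 + p.2) (r, β * w) :=
    EReal.continuousAt_add (.inl (EReal.coe_ne_top r)) (.inl (EReal.coe_ne_bot r))
  exact hadd.tendsto.comp ((EReal.tendsto_coe.2 hu).prodMk_nhds hmul)

variable {E Ω : Type*} {X K : Set E} {Y : E → Ω → Set E} {β : ℝ} {φ : E → E → Ω → ℝ}
  {φν : ℕ → E → E → Ω → ℝ} {Us : ℕ → E → EReal} {U : E → EReal} {x y : E} {ξ : Ω}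

lemma EpiConvergesOn.objective_le_liminf [TopologicalSpace E] [FirstCountableTopology E]
    [TopologicalSpace Ω] [FirstCountableTopology Ω] (hβ : 0 ≤ β)
    (hφ : EpiConvergesOn (X ×ˢ X ×ˢ univ) (fun ν p => (φν ν p.1 p.2.1 p.2.2 : EReal))
      fun p => (φ p.1 p.2.1 p.2.2 : EReal))
    (hU : EpiConvergesOn X Us U) (hx : x ∈ X) (hK : K ⊆ X) (hy : y ∈ K) :
    φ x y ξ + β * U y ≤ liminf
      (Function.uncurry fun ν y => (φν ν x y ξ : EReal) + β * Us ν y) (atTop ×ˢ 𝓝[K] y) := by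
  have hφle : (φ x y ξ : EReal) ≤
      liminf (Function.uncurry fun ν y => (φν ν x y ξ : EReal)) (atTop ×ˢ 𝓝[K] y) :=
    (hφ.le_liminf (z := (x, y, ξ)) ⟨hx, hK hy, mem_univ ξ⟩).trans <|
      liminf_uncurry_le_liminf_uncurry_comp (m := fun w => (x, w, ξ))
        (Continuous.continuousWithinAt (by fun_prop)) fun w hw => ⟨hx, hK hw, mem_univ ξ⟩
  have hUle : U y ≤ liminf (Function.uncurry Us) (atTop ×ˢ 𝓝[K] y) :=
    (hU.le_liminf (hK hy)).trans <|
      liminf_le_liminf_of_le (prod_mono le_rfl (nhdsWithin_mono y hK))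
  have : (𝓝[K] y).NeBot := mem_closure_iff_nhdsWithin_neBot.1 (subset_closure hy)
  exact add_mul_le_liminf hβ hφle hUle

lemma tendsto_bop [TopologicalSpace E] [FirstCountableTopology E]
    [TopologicalSpace Ω] [FirstCountableTopology Ω] (hβ : 0 ≤ β)
    (hφ : EpiConvergesOn (X ×ˢ X ×ˢ univ) (fun ν p => (φν ν p.1 p.2.1 p.2.2 : EReal))
      fun p => (φ p.1 p.2.1 p.2.2 : EReal))
    (hφlim : ∀ y ∈ X, Tendsto (fun ν => φν ν x y ξ) atTop (𝓝 (φ x y ξ)))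
    (hU : EpiConvergesOn X Us U) (hUlim : ∀ y ∈ X, Tendsto (fun ν => Us ν y) atTop (𝓝 (U y)))
    (hx : x ∈ X) (hK : IsCompact (Y x ξ)) (hKX : Y x ξ ⊆ X) :
    Tendsto (fun ν => bop Y β (φν ν) (Us ν) x ξ) atTop (𝓝 (bop Y β φ U x ξ)) :=
  tendsto_of_le_liminf_of_limsup_le
    (iInf_le_liminf_iInf_of_isCompact hK fun _ hy => hφ.objective_le_liminf hβ hU hx hKX hy)
    (limsup_iInf_le_iInf fun y hy =>
      (tendsto_add_mul (hφlim y (hKX hy)) (hUlim y (hKX hy))).limsup_eq.le)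

/-- The Bellman operator `B` of the paper: the expectation of `b(f)(x, ·)` under `P`. -/
def bellman [MeasurableSpace Ω] (P : Measure Ω) (Y : E → Ω → Set E) (β : ℝ)
    (φ : E → E → Ω → ℝ) (f : E → EReal) (x : E) : EReal :=
  eintegral P (bop Y β φ f x)

/-- The equi-semicontinuity and asymptotic integrability conditions on a sequence `Us` and on the
functions `b_ν(Us ν)(x, ·)`, for each state `x ∈ X` separately, under which the Bellman operators
pass to the limit along `Us`. -/
structure BellmanRegular [PseudoMetricSpace E] [PseudoMetricSpace Ω] [MeasurableSpace Ω]
    (X : Set E) (Y : E → Ω → Set E) (β : ℝ) (φν : ℕ → E → E → Ω → ℝ) (Pν : ℕ → Measure Ω)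
    (Us : ℕ → E → EReal) : Prop where
  equiLscOn : EquiLscOn X Us
  equiLscOn_bop : ∀ x ∈ X, EquiLscOn univ fun ν => bop Y β (φν ν) (Us ν) x
  equiUscOn_bop : ∀ x ∈ X, EquiUscOn univ fun ν => bop Y β (φν ν) (Us ν) x
  asympInfIntegrable : ∀ x ∈ X, AsympInfIntegrable Pν fun ν => bop Y β (φν ν) (Us ν) x
  asympSupIntegrable : ∀ x ∈ X, AsympInfIntegrable Pν fun ν ξ => -bop Y β (φν ν) (Us ν) x ξ

lemma BellmanRegular.tendsto_bellman [PseudoMetricSpace E] [PseudoMetricSpace Ω]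
    [MeasurableSpace Ω] [OpensMeasurableSpace Ω] {P : Measure Ω} {Pν : ℕ → Measure Ω}
    [IsProbabilityMeasure P] [∀ ν, IsProbabilityMeasure (Pν ν)]
    (h : BellmanRegular X Y β φν Pν Us) (hP : WeakConv Pν P) (hβ : 0 ≤ β)
    (hφ : EpiConvergesOn (X ×ˢ X ×ˢ univ) (fun ν p => (φν ν p.1 p.2.1 p.2.2 : EReal))
      fun p => (φ p.1 p.2.1 p.2.2 : EReal))
    (hφlim : ∀ y ∈ X, ∀ ξ, Tendsto (fun ν => φν ν x y ξ) atTop (𝓝 (φ x y ξ)))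
    (hU : EpiConvergesOn X Us U) (hint : EIntegrable P (bop Y β φ U x))
    (hintν : ∀ ν, EIntegrable (Pν ν) (bop Y β (φν ν) (Us ν) x))
    (hx : x ∈ X) (hY : ∀ ξ, IsCompact (Y x ξ) ∧ Y x ξ ⊆ X) :
    Tendsto (fun ν => bellman (Pν ν) Y β (φν ν) (Us ν) x) atTop (𝓝 (bellman P Y β φ U x)) :=
  hP.tendsto_eintegral hint hintν
    (fun ξ => tendsto_bop hβ hφ (fun y hy => hφlim y hy ξ) hU
      (fun _ hy => hU.tendsto h.equiLscOn hy) hx (hY ξ).1 (hY ξ).2)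
    (h.equiLscOn_bop x hx) (h.equiUscOn_bop x hx)
    (h.asympInfIntegrable x hx) (h.asympSupIntegrable x hx)

end Bellman

section FixedPoint

variable {E : Type*} [PseudoMetricSpace E] {X : Set E} {zc : E × ℝ} {𝒱 : Set (E → EReal)}
  {B : (E → EReal) → E → EReal} {Bν : ℕ → (E → EReal) → E → EReal} {Vs : ℕ → E → EReal}
  {V W : E → EReal}

lemma eqOn_fixedPoint_of_tendsto_awDist_subseq (hX : IsClosed X) (h𝒱 : ∀ U ∈ 𝒱, LscFcnOn X U)
    (hB : ∀ Us : ℕ → E → EReal, (∀ ν, Us ν ∈ 𝒱) → ∀ U ∈ 𝒱, EpiConvergesOn X Us U → ∀ x ∈ X,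
      Tendsto (fun ν => Us ν x) atTop (𝓝 (U x)) ∧
      Tendsto (fun ν => Bν ν (Us ν) x) atTop (𝓝 (B U x)))
    (hVs : ∀ ν, Vs ν ∈ 𝒱) (hfix : ∀ ν, EqOn (Vs ν) (Bν ν (Vs ν)) X) (hW : W ∈ 𝒱)
    {ψ : ℕ → ℕ} (hψ : StrictMono ψ)
    (hlim : Tendsto (fun κ => awDist X zc (Vs (ψ κ)) W) atTop (𝓝 0)) : EqOn W (B W) X := by
  -- `hB` pairs `Us ν` with `Bν ν`, so the subsequence is completed by `W` off the range of `ψ`.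
  let Us : ℕ → E → EReal := Function.extend ψ (Vs ∘ ψ) fun _ => W
  have hUsψ (κ : ℕ) : Us (ψ κ) = Vs (ψ κ) := hψ.injective.extend_apply _ _ κ
  have hUs𝒱 : ∀ ν, Us ν ∈ 𝒱 := extend_const_mem (fun κ => hVs (ψ κ)) hW
  have hUsW : Tendsto (fun ν => awDist X zc (Us ν) W) atTop (𝓝 0) := by
    rw [← Nat.cofinite_eq_atTop] at hlim ⊢
    refine (tendsto_comap_iff (g := (awDist X zc · W))).1 <|
      tendsto_extend_const hψ.injective ?_ (tendsto_comap_iff.2 hlim)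
    rw [← map_le_iff_le_comap, map_pure, awDist_self]
    exact pure_le_nhds 0
  have hepi : EpiConvergesOn X Us W :=
    epiConvergesOn_of_tendsto_awDist hX (fun ν => h𝒱 _ (hUs𝒱 ν)) (h𝒱 W hW) hUsW
  intro x hx
  obtain ⟨hxW, hxB⟩ := hB Us hUs𝒱 W hW hepi x hx
  refine tendsto_nhds_unique (hxW.comp hψ.tendsto_atTop) ?_
  refine (hxB.comp hψ.tendsto_atTop).congr fun κ => ?_
  simp only [Function.comp_apply, hUsψ, hfix (ψ κ) hx]

lemma tendsto_awDist_of_unique_fixedPoint (hX : IsClosed X) (h𝒱 : ∀ U ∈ 𝒱, LscFcnOn X U)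
    (hcompact : DlSeqCompact X zc 𝒱)
    (hB : ∀ Us : ℕ → E → EReal, (∀ ν, Us ν ∈ 𝒱) → ∀ U ∈ 𝒱, EpiConvergesOn X Us U → ∀ x ∈ X,
      Tendsto (fun ν => Us ν x) atTop (𝓝 (U x)) ∧
      Tendsto (fun ν => Bν ν (Us ν) x) atTop (𝓝 (B U x)))
    (hVs : ∀ ν, Vs ν ∈ 𝒱) (hfix : ∀ ν, EqOn (Vs ν) (Bν ν (Vs ν)) X)
    (huniq : ∀ W ∈ 𝒱, EqOn W (B W) X → EqOn W V X) :
    Tendsto (fun ν => awDist X zc (Vs ν) V) atTop (𝓝 0) := by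
  refine tendsto_of_subseq_tendsto fun θ hθ => ?_
  obtain ⟨χ, -, hχ⟩ := strictMono_subseq_of_tendsto_atTop hθ
  obtain ⟨W, hW, ψ, hψ, hlim⟩ := hcompact (fun κ => Vs (θ (χ κ))) fun κ => hVs _
  have hWfix : EqOn W (B W) X :=
    eqOn_fixedPoint_of_tendsto_awDist_subseq hX h𝒱 hB hVs hfix hW (hχ.comp hψ) hlim
  exact ⟨χ ∘ ψ, hlim.congr fun κ => awDist_congr_right zc (huniq W hW hWfix)⟩

end FixedPoint

theorem decision_rule_consistency_unique_fixed_point_general {E Ω : Type*} [MetricSpace E]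
    [PseudoMetricSpace Ω] [MeasurableSpace Ω] [OpensMeasurableSpace Ω]
    {X : Set E} (hX : IsClosed X) {Y : E → Ω → Set E}
    (hY : ∀ x ∈ X, ∀ ξ, (Y x ξ).Nonempty ∧ IsCompact (Y x ξ) ∧ Y x ξ ⊆ X)
    {β : ℝ} (hβ : 0 ≤ β) {φ : E → E → Ω → ℝ} {φν : ℕ → E → E → Ω → ℝ}
    {P : Measure Ω} {Pν : ℕ → Measure Ω}
    [IsProbabilityMeasure P] [∀ ν, IsProbabilityMeasure (Pν ν)]
    {zc : E × ℝ} {𝒱 : Set (E → EReal)} (h𝒱lsc : ∀ V ∈ 𝒱, LscFcnOn X V)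
    (hint : ∀ V ∈ 𝒱, ∀ x ∈ X, EIntegrable P (bop Y β φ V x))
    (hintν : ∀ ν, ∀ V ∈ 𝒱, ∀ x ∈ X, EIntegrable (Pν ν) (bop Y β (φν ν) V x))
    (hweak : WeakConv Pν P)
    (hφe : EpiConvergesOn (X ×ˢ X ×ˢ univ) (fun ν p => (φν ν p.1 p.2.1 p.2.2 : EReal))
      fun p => (φ p.1 p.2.1 p.2.2 : EReal))
    (hφp : ∀ x ∈ X, ∀ y ∈ X, ∀ ξ, Tendsto (fun ν => φν ν x y ξ) atTop (𝓝 (φ x y ξ)))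
    (hreg : ∀ Us : ℕ → E → EReal, (∀ ν, Us ν ∈ 𝒱) → (∃ U, EpiConvergesOn X Us U) →
      BellmanRegular X Y β φν Pν Us)
    (hcompact : DlSeqCompact X zc 𝒱) {Vs : ℕ → E → EReal}
    (hfix : ∀ ν, Vs ν ∈ 𝒱 ∧ EqOn (Vs ν) (bellman (Pν ν) Y β (φν ν) (Vs ν)) X)
    {V : E → EReal} (hV : V ∈ 𝒱 ∧ EqOn V (bellman P Y β φ V) X)
    (huniq : ∀ W ∈ 𝒱, EqOn W (bellman P Y β φ W) X → EqOn W V X) :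
    EpiConvergesOn X Vs V ∧ ∀ x ∈ X, ∀ ξ,
      OuterLimit (fun ν => ArgminOn (Y x ξ) fun y => (φν ν x y ξ : EReal) + β * Vs ν y) ⊆
        ArgminOn (Y x ξ) (fun y => (φ x y ξ : EReal) + β * V y) ∧
      (ArgminOn (Y x ξ) fun y => (φ x y ξ : EReal) + β * V y).Nonempty := by
  have hVs (ν : ℕ) : Vs ν ∈ 𝒱 := (hfix ν).1
  have hdist : Tendsto (fun ν => awDist X zc (Vs ν) V) atTop (𝓝 0) := by
    refine tendsto_awDist_of_unique_fixedPoint hX h𝒱lsc hcompact (fun Us hUs U hU hepi x hx => ?_)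
      hVs (fun ν => (hfix ν).2) huniq
    have hUs_reg : BellmanRegular X Y β φν Pν Us := hreg Us hUs ⟨U, hepi⟩
    exact ⟨hepi.tendsto hUs_reg.equiLscOn hx, hUs_reg.tendsto_bellman hweak hβ hφe (hφp x hx) hepi
      (hint U hU x hx) (fun ν => hintν ν _ (hUs ν) x hx) hx fun ξ => (hY x hx ξ).2⟩
  have hepi : EpiConvergesOn X Vs V :=
    epiConvergesOn_of_tendsto_awDist hX (fun ν => h𝒱lsc _ (hVs ν)) (h𝒱lsc V hV.1) hdist
  refine ⟨hepi, fun x hx ξ => ?_⟩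
  obtain ⟨hne, hcomp, hYX⟩ := hY x hx ξ
  have hle : ∀ y ∈ Y x ξ, (φ x y ξ : EReal) + β * V y ≤ liminf (Function.uncurry
      fun ν y => (φν ν x y ξ : EReal) + β * Vs ν y) (atTop ×ˢ 𝓝[Y x ξ] y) :=
    fun y hy => hφe.objective_le_liminf hβ hepi hx hYX hy
  have hlim : ∀ y ∈ Y x ξ, limsup (fun ν => (φν ν x y ξ : EReal) + β * Vs ν y) atTop ≤
      φ x y ξ + β * V y := fun y hy =>
    (tendsto_add_mul (hφp x hx y (hYX hy) ξ)
      (hepi.tendsto (hreg Vs hVs ⟨V, hepi⟩).equiLscOn (hYX hy))).limsup_eq.le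
  exact ⟨outerLimit_argminOn_subset hcomp.isClosed hle hlim, argminOn_nonempty hcomp hne hle hlim⟩

/-- Consistency of approximating decision rules under a unique fixed
point. -/
theorem decision_rule_consistency_unique_fixed_point {n m : ℕ}
    (X : Set (EuclideanSpace ℝ (Fin n))) (hX : IsClosed X)
    (Ξ : Set (EuclideanSpace ℝ (Fin m))) (hΞ : IsClosed Ξ)
    (Y : EuclideanSpace ℝ (Fin n) → Ξ → Set (EuclideanSpace ℝ (Fin n)))
    (hY : ∀ x ∈ X, ∀ ξ : Ξ, (Y x ξ).Nonempty ∧ IsCompact (Y x ξ) ∧ Y x ξ ⊆ X)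
    (β : ℝ) (hβ : β ∈ Set.Ioo (0 : ℝ) 1)
    (φ : EuclideanSpace ℝ (Fin n) → EuclideanSpace ℝ (Fin n) → Ξ → ℝ)
    (φν : ℕ → EuclideanSpace ℝ (Fin n) → EuclideanSpace ℝ (Fin n) → Ξ → ℝ)
    (P : Measure Ξ) (Pν : ℕ → Measure Ξ)
    [IsProbabilityMeasure P] [∀ ν, IsProbabilityMeasure (Pν ν)]
    (zc : EuclideanSpace ℝ (Fin n) × ℝ)
    (𝒱 : Set (EuclideanSpace ℝ (Fin n) → EReal))
    (h𝒱lsc : ∀ V ∈ 𝒱, LscFcnOn X V)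
    -- Assumption 2
    (hA2 : ∀ V ∈ 𝒱, (∀ x ∈ X, EIntegrable P (bop Y β φ V x)) ∧
      (fun x => eintegral P (bop Y β φ V x)) ∈ 𝒱)
    (hA2ν : ∀ ν, ∀ V ∈ 𝒱, (∀ x ∈ X, EIntegrable (Pν ν) (bop Y β (φν ν) V x)) ∧
      (fun x => eintegral (Pν ν) (bop Y β (φν ν) V x)) ∈ 𝒱)
    -- 𝒱 is closed under the Attouch–Wets distance
    (h𝒱closed : DlSeqClosed X zc 𝒱)
    -- convergence of the data
    (hweak : WeakConv Pν P)
    (hφe : EpiConvergesOn (X ×ˢ X ×ˢ (univ : Set Ξ))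
      (fun ν p => ((φν ν p.1 p.2.1 p.2.2 : ℝ) : EReal))
      (fun p => ((φ p.1 p.2.1 p.2.2 : ℝ) : EReal)))
    (hφp : ∀ x ∈ X, ∀ y ∈ X, ∀ ξ : Ξ,
      Tendsto (fun ν => φν ν x y ξ) atTop (𝓝 (φ x y ξ)))
    -- every epi-convergent sequence in 𝒱 is equi-lsc and satisfies (i) and (ii)
    (hequi : ∀ Vs : ℕ → (EuclideanSpace ℝ (Fin n) → EReal),
      (∀ ν, Vs ν ∈ 𝒱) → (∃ W, EpiConvergesOn X Vs W) →
      EquiLscOn X Vs ∧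
      (∀ xb ∈ X, liminfAlphaBot (fun α => liminfNuX X xb (fun ν x =>
        eintegral (Pν ν) (truncBelow (bop Y β (φν ν) (Vs ν) x) α))) = 0) ∧
      (∀ ν, LowerSemicontinuousOn
        (fun p : EuclideanSpace ℝ (Fin n) × Ξ => bop Y β (φν ν) (Vs ν) p.1 p.2)
        (X ×ˢ (univ : Set Ξ))) ∧
      EquiLscOn (X ×ˢ (univ : Set Ξ)) (fun ν p => bop Y β (φν ν) (Vs ν) p.1 p.2) ∧
      (∀ xb ∈ X,
        limsupAlphaTop (fun α => limsupNu (fun ν =>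
          eintegral (Pν ν) (truncAbove (bop Y β (φν ν) (Vs ν) xb) α))) = 0 ∧
        (∀ ν, UpperSemicontinuous (fun ξ : Ξ => bop Y β (φν ν) (Vs ν) xb ξ)) ∧
        EquiUscOn (univ : Set Ξ) (fun ν ξ => bop Y β (φν ν) (Vs ν) xb ξ)))
    -- 𝒱 is compact under the Attouch–Wets distance and each B_ν has a fixed point
    (hcompact : DlSeqCompact X zc 𝒱)
    (Vs : ℕ → (EuclideanSpace ℝ (Fin n) → EReal))
    (hfix : ∀ ν, Vs ν ∈ 𝒱 ∧ ∀ x ∈ X, Vs ν x = eintegral (Pν ν) (bop Y β (φν ν) (Vs ν) x))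
    -- the fixed point V = B(V) in 𝒱 exists and is unique
    (V : EuclideanSpace ℝ (Fin n) → EReal)
    (hV : V ∈ 𝒱 ∧ ∀ x ∈ X, V x = eintegral P (bop Y β φ V x))
    (huniq : ∀ W ∈ 𝒱, (∀ x ∈ X, W x = eintegral P (bop Y β φ W x)) →
      ∀ x ∈ X, W x = V x) :
    EpiConvergesOn X Vs V ∧
    ∀ x ∈ X, ∀ ξ : Ξ,
      OuterLimit (fun ν => ArgminOn (Y x ξ)
          (fun y => ((φν ν x y ξ : ℝ) : EReal) + (β : EReal) * Vs ν y)) ⊆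
        ArgminOn (Y x ξ) (fun y => ((φ x y ξ : ℝ) : EReal) + (β : EReal) * V y) ∧
      (ArgminOn (Y x ξ)
        (fun y => ((φ x y ξ : ℝ) : EReal) + (β : EReal) * V y)).Nonempty := by
  refine decision_rule_consistency_unique_fixed_point_general hX hY hβ.1.le h𝒱lsc
    (fun U hU => (hA2 U hU).1) (fun ν U hU => (hA2ν ν U hU).1) hweak hφe hφp
    (fun Us hUs hW => ?_) hcompact hfix hV huniq
  obtain ⟨hlsc, hinf, -, hbop, hsup⟩ := hequi Us hUs hW
  exact ⟨hlsc, fun x hx => hbop.slice_right hx, fun x hx => (hsup x hx).2.2,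
    fun x hx => asympInfIntegrable_of_liminfAlphaBot_eq_zero hx (hinf x hx),
    fun x hx => asympInfIntegrable_neg_of_limsupAlphaTop_eq_zero (hsup x hx).1⟩

end
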